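/- arXiv:2002.08939 — 5 statements merged into one kernel-verified Lean document; each statement's English description precedes it below -/
import Mathlib

section
/- For a smooth function ζ : ℝ → ℝ, let 𝒟(ζ) : ℝ⁵ → ℝ⁵ be the vector field defined by 𝒟(ζ)(t,x,u,f,g) = (0, ζ(x), ½ζ'(x)u, 2ζ'(x)f, ½ζ'(x)g − ½ζ'''(x)u·f), and for a smooth function χ : ℝ → ℝ, let 𝒵(χ) : ℝ⁵ → ℝ⁵ be the vector field defined by 𝒵(χ)(t,x,u,f,g) = (0, 0, χ(x), 0, −χ''(x)·f). Then for any smooth ζ, χ : ℝ → ℝ, the Lie bracket of 𝒟(ζ) and 𝒵(χ) equals 𝒵(ζχ' − ½ζ'χ); that is, for every p ∈ ℝ⁵, D(𝒵(χ))(p)(𝒟(ζ)(p)) − D(𝒟(ζ))(p)(𝒵(χ)(p)) = 𝒵(ζχ' − ½ζ'χ)(p), where DV(p) denotes the Fréchet derivative of V at p. -/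
/-!
Both sides are computed explicitly. Since `DVec ζ` and `ZVec χ` depend on `p` only through smooth
functions of `p 1` and polynomials in the other coordinates, they are differentiable, so each
Fréchet derivative applied to a vector is a directional derivative, found coordinate by coordinate
by differentiating along the line `s ↦ p + s • v` (`fderiv_ZVec_apply`, `fderiv_DVec_apply`).
On the right-hand side, the product rule gives
`(ζχ' - ½ζ'χ)'' = ζχ''' + (3/2)ζ'χ'' - ½ζ'''χ` (the `ζ''χ'` terms cancel), and the two sides agree
by polynomial arithmetic in the coordinates.
-/

/-- The vector field 𝒟(ζ) = ζ∂x + ½ζ'u∂u + 2ζ'f∂f + ½(ζ'g − ζ'''uf)∂g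
on ℝ⁵ with coordinates (t, x, u, f, g). -/
noncomputable def DVec (ζ : ℝ → ℝ) (p : Fin 5 → ℝ) : Fin 5 → ℝ :=
  ![0, ζ (p 1), (1 / 2) * deriv ζ (p 1) * p 2, 2 * deriv ζ (p 1) * p 3,
    (1 / 2) * deriv ζ (p 1) * p 4 - (1 / 2) * deriv (deriv (deriv ζ)) (p 1) * p 2 * p 3]

/-- The vector field 𝒵(χ) = χ∂u − χ''f∂g on ℝ⁵ with coordinates (t, x, u, f, g). -/
noncomputable def ZVec (χ : ℝ → ℝ) (p : Fin 5 → ℝ) : Fin 5 → ℝ :=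
  ![0, 0, χ (p 1), 0, -(deriv (deriv χ) (p 1)) * p 3]

theorem contDiff_deriv_smooth {φ : ℝ → ℝ} (hφ : ContDiff ℝ (⊤ : ℕ∞) φ) :
    ContDiff ℝ (⊤ : ℕ∞) (deriv φ) :=
  (contDiff_infty_iff_deriv.1 hφ).2

theorem hasDerivAt_smooth {φ : ℝ → ℝ} (hφ : ContDiff ℝ (⊤ : ℕ∞) φ) (x : ℝ) :
    HasDerivAt φ (deriv φ x) x :=
  ((contDiff_infty_iff_deriv.1 hφ).1 x).hasDerivAt

theorem hasDerivAt_line_coord (p v : Fin 5 → ℝ) (i : Fin 5) :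
    HasDerivAt (fun s : ℝ => (p + s • v) i) (v i) 0 := by
  simpa using ((hasDerivAt_id (0 : ℝ)).mul_const (v i)).const_add (p i)

theorem hasDerivAt_line_comp {φ : ℝ → ℝ} (hφ : ContDiff ℝ (⊤ : ℕ∞) φ)
    (p v : Fin 5 → ℝ) (i : Fin 5) :
    HasDerivAt (fun s : ℝ => φ ((p + s • v) i)) (deriv φ (p i) * v i) 0 := by
  have h : HasDerivAt φ (deriv φ (p i)) ((p + (0 : ℝ) • v) i) := by
    simpa using hasDerivAt_smooth hφ (p i)
  exact h.comp (0 : ℝ) (hasDerivAt_line_coord p v i)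

/-- A Fréchet derivative applied to `v` can be read off from the derivatives of the coordinate
functions along the line through `p` in direction `v`. -/
theorem fderiv_apply_eq_of_line {F : (Fin 5 → ℝ) → Fin 5 → ℝ} {p v w : Fin 5 → ℝ}
    (hF : DifferentiableAt ℝ F p)
    (h : ∀ i, HasDerivAt (fun s : ℝ => F (p + s • v) i) (w i) 0) :
    fderiv ℝ F p v = w := by
  rw [← hF.lineDeriv_eq_fderiv]
  exact (hasDerivAt_pi.2 h).deriv

theorem differentiable_smooth {φ : ℝ → ℝ} (hφ : ContDiff ℝ (⊤ : ℕ∞) φ) :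
    Differentiable ℝ φ :=
  (contDiff_infty_iff_deriv.1 hφ).1

theorem differentiable_ZVec {χ : ℝ → ℝ} (hχ : ContDiff ℝ (⊤ : ℕ∞) χ) :
    Differentiable ℝ (ZVec χ) := by
  have h0 := differentiable_smooth hχ
  have h2 := differentiable_smooth (contDiff_deriv_smooth (contDiff_deriv_smooth hχ))
  rw [differentiable_pi]
  intro i
  fin_cases i <;> simp [ZVec] <;> fun_prop

theorem differentiable_DVec {ζ : ℝ → ℝ} (hζ : ContDiff ℝ (⊤ : ℕ∞) ζ) :
    Differentiable ℝ (DVec ζ) := by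
  have h0 := differentiable_smooth hζ
  have h1 := differentiable_smooth (contDiff_deriv_smooth hζ)
  have h3 := differentiable_smooth
    (contDiff_deriv_smooth (contDiff_deriv_smooth (contDiff_deriv_smooth hζ)))
  rw [differentiable_pi]
  intro i
  fin_cases i <;> simp [DVec] <;> fun_prop

theorem fderiv_ZVec_apply {χ : ℝ → ℝ} (hχ : ContDiff ℝ (⊤ : ℕ∞) χ) (p v : Fin 5 → ℝ) :
    fderiv ℝ (ZVec χ) p v =
      ![0, 0, deriv χ (p 1) * v 1, 0,
        -(deriv (deriv (deriv χ)) (p 1) * v 1) * p 3 - deriv (deriv χ) (p 1) * v 3] := by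
  have h0 := hasDerivAt_line_comp hχ p v 1
  have h2 := hasDerivAt_line_comp (contDiff_deriv_smooth (contDiff_deriv_smooth hχ)) p v 1
  have c3 := hasDerivAt_line_coord p v 3
  refine fderiv_apply_eq_of_line (differentiable_ZVec hχ p) fun i => ?_
  fin_cases i
  · exact hasDerivAt_const _ _
  · exact hasDerivAt_const _ _
  · exact h0
  · exact hasDerivAt_const _ _
  · refine (h2.neg.mul c3).congr_deriv ?_
    simp
    ring

theorem fderiv_DVec_apply {ζ : ℝ → ℝ} (hζ : ContDiff ℝ (⊤ : ℕ∞) ζ) (p v : Fin 5 → ℝ) :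
    fderiv ℝ (DVec ζ) p v =
      ![0, deriv ζ (p 1) * v 1,
        (1 / 2) * (deriv (deriv ζ) (p 1) * v 1 * p 2 + deriv ζ (p 1) * v 2),
        2 * (deriv (deriv ζ) (p 1) * v 1 * p 3 + deriv ζ (p 1) * v 3),
        (1 / 2) * (deriv (deriv ζ) (p 1) * v 1 * p 4 + deriv ζ (p 1) * v 4)
          - (1 / 2) * (deriv (deriv (deriv (deriv ζ))) (p 1) * v 1 * p 2 * p 3
            + deriv (deriv (deriv ζ)) (p 1) * (v 2 * p 3 + p 2 * v 3))] := by
  have h0 := hasDerivAt_line_comp hζ p v 1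
  have h1 := hasDerivAt_line_comp (contDiff_deriv_smooth hζ) p v 1
  have h3 := hasDerivAt_line_comp
    (contDiff_deriv_smooth (contDiff_deriv_smooth (contDiff_deriv_smooth hζ))) p v 1
  have c2 := hasDerivAt_line_coord p v 2
  have c3 := hasDerivAt_line_coord p v 3
  have c4 := hasDerivAt_line_coord p v 4
  refine fderiv_apply_eq_of_line (differentiable_DVec hζ p) fun i => ?_
  fin_cases i
  · exact hasDerivAt_const _ _
  · exact h0
  · refine ((h1.const_mul (1 / 2)).mul c2).congr_deriv ?_
    simp
    ring
  · refine ((h1.const_mul 2).mul c3).congr_deriv ?_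
    simp
    ring
  · refine (((h1.const_mul (1 / 2)).mul c4).sub
      (((h3.const_mul (1 / 2)).mul c2).mul c3)).congr_deriv ?_
    simp
    ring

theorem deriv_deriv_bracket_coeff {ζ χ : ℝ → ℝ}
    (hζ : ContDiff ℝ (⊤ : ℕ∞) ζ) (hχ : ContDiff ℝ (⊤ : ℕ∞) χ) (x : ℝ) :
    deriv (deriv fun x => ζ x * deriv χ x - (1 / 2) * deriv ζ x * χ x) x =
      ζ x * deriv (deriv (deriv χ)) x + (3 / 2) * deriv ζ x * deriv (deriv χ) x
        - (1 / 2) * deriv (deriv (deriv ζ)) x * χ x := by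
  have hζ1 := contDiff_deriv_smooth hζ
  have hζ2 := contDiff_deriv_smooth hζ1
  have hχ1 := contDiff_deriv_smooth hχ
  have hχ2 := contDiff_deriv_smooth hχ1
  have e : (deriv fun x => ζ x * deriv χ x - (1 / 2) * deriv ζ x * χ x) =
      fun y => (1 / 2) * deriv ζ y * deriv χ y + ζ y * deriv (deriv χ) y
        - (1 / 2) * deriv (deriv ζ) y * χ y := by
    funext y
    refine HasDerivAt.deriv ((((hasDerivAt_smooth hζ y).mul (hasDerivAt_smooth hχ1 y)).sub
      (((hasDerivAt_smooth hζ1 y).const_mul (1 / 2)).mul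
        (hasDerivAt_smooth hχ y))).congr_deriv ?_)
    ring
  rw [e]
  refine HasDerivAt.deriv ((((((hasDerivAt_smooth hζ1 x).const_mul (1 / 2)).mul
    (hasDerivAt_smooth hχ1 x)).add
      ((hasDerivAt_smooth hζ x).mul (hasDerivAt_smooth hχ2 x))).sub
        (((hasDerivAt_smooth hζ2 x).const_mul (1 / 2)).mul
          (hasDerivAt_smooth hχ x))).congr_deriv ?_)
  ring

theorem commutator_D_Z
    (ζ χ : ℝ → ℝ) (hζ : ContDiff ℝ (⊤ : ℕ∞) ζ) (hχ : ContDiff ℝ (⊤ : ℕ∞) χ) :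
    ∀ p : Fin 5 → ℝ,
      fderiv ℝ (ZVec χ) p (DVec ζ p) - fderiv ℝ (DVec ζ) p (ZVec χ p)
        = ZVec (fun x => ζ x * deriv χ x - (1 / 2) * deriv ζ x * χ x) p := by
  intro p
  rw [fderiv_ZVec_apply hχ, fderiv_DVec_apply hζ]
  funext i
  fin_cases i <;> simp [DVec, ZVec, deriv_deriv_bracket_coeff hζ hχ, -one_div] <;> ring
end

section
/- Let h : ℝ → ℝ and let v : ℝ × ℝ → ℝ be twice continuously differentiable with v_tt(s,y) = −v_xx(s,y) + h(v(s,y)) for all (s,y) ∈ ℝ². Then the function u(t,x) := v(e^{-x}·sin(t), e^{-x}·cos(t)) satisfies u_tt(t,x) = −u_xx(t,x) + e^{-2x}·h(u(t,x)) for all (t,x) ∈ ℝ². -/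
/-!
Write `S = e^{-x} sin t` and `Y = e^{-x} cos t`. Then `S_t = Y`, `Y_t = -S`, `S_x = -S`, `Y_x = -Y`,
so the chain rule gives `u_t = Y v_t - S v_x` and `u_x = -S v_t - Y v_x`, with the derivatives of
`v` taken at `(S, Y)`. Differentiating once more and adding, the first-order terms and the mixed
second-order terms cancel, and `u_tt + u_xx = (S² + Y²) (v_tt + v_xx)`, where `S² + Y² = e^{-2x}`.
The mixed terms cancel without appeal to the symmetry of second derivatives.
-/

/-- Partial derivative with respect to the first argument. -/
noncomputable def pdt (u : ℝ → ℝ → ℝ) : ℝ → ℝ → ℝ := fun t x => deriv (fun s => u s x) t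

/-- Partial derivative with respect to the second argument. -/
noncomputable def pdx (u : ℝ → ℝ → ℝ) : ℝ → ℝ → ℝ := fun t x => deriv (fun y => u t y) x

theorem pdt_eq_fderiv {v : ℝ → ℝ → ℝ} (hv : ContDiff ℝ 1 fun p : ℝ × ℝ => v p.1 p.2) (s y : ℝ) :
    pdt v s y = fderiv ℝ (fun p : ℝ × ℝ => v p.1 p.2) (s, y) (1, 0) := by
  have hF := (hv.differentiable one_ne_zero (s, y)).hasFDerivAt
  exact (hF.comp_hasDerivAt (f := fun r : ℝ => (r, y)) s
    ((hasDerivAt_id s).prodMk (hasDerivAt_const s y))).deriv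

theorem pdx_eq_fderiv {v : ℝ → ℝ → ℝ} (hv : ContDiff ℝ 1 fun p : ℝ × ℝ => v p.1 p.2) (s y : ℝ) :
    pdx v s y = fderiv ℝ (fun p : ℝ × ℝ => v p.1 p.2) (s, y) (0, 1) := by
  have hF := (hv.differentiable one_ne_zero (s, y)).hasFDerivAt
  exact (hF.comp_hasDerivAt (f := fun r : ℝ => (s, r)) y
    ((hasDerivAt_const y s).prodMk (hasDerivAt_id y))).deriv

theorem contDiff_pdt {v : ℝ → ℝ → ℝ} (hv : ContDiff ℝ 2 fun p : ℝ × ℝ => v p.1 p.2) :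
    ContDiff ℝ 1 fun p : ℝ × ℝ => pdt v p.1 p.2 := by
  simp only [pdt_eq_fderiv (hv.of_le one_le_two)]
  exact (hv.fderiv_right (m := 1) (by norm_num)).clm_apply contDiff_const

theorem contDiff_pdx {v : ℝ → ℝ → ℝ} (hv : ContDiff ℝ 2 fun p : ℝ × ℝ => v p.1 p.2) :
    ContDiff ℝ 1 fun p : ℝ × ℝ => pdx v p.1 p.2 := by
  simp only [pdx_eq_fderiv (hv.of_le one_le_two)]
  exact (hv.fderiv_right (m := 1) (by norm_num)).clm_apply contDiff_const

/-- The chain rule along a plane curve, in terms of the partial derivatives `pdt` and `pdx`. -/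
theorem hasDerivAt_comp_curve {v : ℝ → ℝ → ℝ} (hv : ContDiff ℝ 1 fun p : ℝ × ℝ => v p.1 p.2)
    {a b : ℝ → ℝ} {a' b' r : ℝ} (ha : HasDerivAt a a' r) (hb : HasDerivAt b b' r) :
    HasDerivAt (fun r => v (a r) (b r))
      (a' * pdt v (a r) (b r) + b' * pdx v (a r) (b r)) r := by
  have hF := (hv.differentiable one_ne_zero (a r, b r)).hasFDerivAt
  have hc := hF.comp_hasDerivAt (f := fun r => (a r, b r)) r (ha.prodMk hb)
  have hsplit : ((a', b') : ℝ × ℝ) = a' • ((1, 0) : ℝ × ℝ) + b' • ((0, 1) : ℝ × ℝ) := by simp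
  rw [hsplit, map_add, map_smul, map_smul, ← pdt_eq_fderiv hv, ← pdx_eq_fderiv hv] at hc
  exact hc

theorem admissible_transformation_T5
    (h : ℝ → ℝ) (v : ℝ → ℝ → ℝ)
    (hv : ContDiff ℝ 2 fun p : ℝ × ℝ => v p.1 p.2)
    (hvpde : ∀ s y, pdt (pdt v) s y = -pdx (pdx v) s y + h (v s y))
    (u : ℝ → ℝ → ℝ)
    (hu : u = fun t x => v (Real.exp (-x) * Real.sin t) (Real.exp (-x) * Real.cos t)) :
    ∀ t x, pdt (pdt u) t x = -pdx (pdx u) t x + Real.exp (-(2 * x)) * h (u t x) := by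
  intro t x
  subst hu
  let S : ℝ → ℝ → ℝ := fun t x => Real.exp (-x) * Real.sin t
  let Y : ℝ → ℝ → ℝ := fun t x => Real.exp (-x) * Real.cos t
  have hSt (t x : ℝ) : HasDerivAt (fun t => S t x) (Y t x) t :=
    (Real.hasDerivAt_sin t).const_mul _
  have hYt (t x : ℝ) : HasDerivAt (fun t => Y t x) (-S t x) t := by
    simpa [S, Y] using (Real.hasDerivAt_cos t).const_mul (Real.exp (-x))
  have hE (x : ℝ) : HasDerivAt (fun x => Real.exp (-x)) (-Real.exp (-x)) x := by
    simpa using (hasDerivAt_neg x).exp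
  have hSx (t x : ℝ) : HasDerivAt (fun x => S t x) (-S t x) x := by
    simpa [S] using (hE x).mul_const (Real.sin t)
  have hYx (t x : ℝ) : HasDerivAt (fun x => Y t x) (-Y t x) x := by
    simpa [Y] using (hE x).mul_const (Real.cos t)
  have hv1 := hv.of_le one_le_two
  have hp := contDiff_pdt hv
  have hq := contDiff_pdx hv
  change pdt (pdt fun t x => v (S t x) (Y t x)) t x =
    -pdx (pdx fun t x => v (S t x) (Y t x)) t x + Real.exp (-(2 * x)) * h (v (S t x) (Y t x))
  have hut : (pdt fun t x => v (S t x) (Y t x)) = fun t x =>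
      Y t x * pdt v (S t x) (Y t x) + -S t x * pdx v (S t x) (Y t x) := by
    funext t x
    exact (hasDerivAt_comp_curve hv1 (hSt t x) (hYt t x)).deriv
  have hux : (pdx fun t x => v (S t x) (Y t x)) = fun t x =>
      -S t x * pdt v (S t x) (Y t x) + -Y t x * pdx v (S t x) (Y t x) := by
    funext t x
    exact (hasDerivAt_comp_curve hv1 (hSx t x) (hYx t x)).deriv
  have hutt := (((hYt t x).mul (hasDerivAt_comp_curve hp (hSt t x) (hYt t x))).add
    ((hSt t x).neg.mul (hasDerivAt_comp_curve hq (hSt t x) (hYt t x)))).deriv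
  have huxx := (((hSx t x).neg.mul (hasDerivAt_comp_curve hp (hSx t x) (hYx t x))).add
    ((hYx t x).neg.mul (hasDerivAt_comp_curve hq (hSx t x) (hYx t x)))).deriv
  have hnorm : Real.exp (-(2 * x)) = S t x ^ 2 + Y t x ^ 2 := by
    have h2 : Real.exp (-(2 * x)) = Real.exp (-x) ^ 2 := by
      rw [← Real.exp_nat_mul]
      congr 1
      push_cast
      ring
    rw [h2]
    simp only [S, Y]
    linear_combination (-Real.exp (-x) ^ 2) * Real.sin_sq_add_cos_sq t
  rw [hut, hux, hnorm]
  refine Eq.trans hutt ?_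
  refine Eq.trans ?_ (congrArg (fun z => -z + (S t x ^ 2 + Y t x ^ 2) * h (v (S t x) (Y t x)))
    huxx.symm)
  simp only [Pi.neg_apply]
  linear_combination (S t x ^ 2 + Y t x ^ 2) * hvpde (S t x) (Y t x)
end

section
/- Let ε ∈ {−1, 1} and ε' ∈ ℝ. Let T, X : ℝ × ℝ → ℝ be three times continuously differentiable with T_t = X_x and X_t = ε·T_x everywhere, and suppose D(t,x) := T_t(t,x)² − ε·T_x(t,x)² > 0 for all (t,x) ∈ ℝ². Let v : ℝ × ℝ → ℝ be twice continuously differentiable with v_tt(s,y) = ε·v_xx(s,y) + ε'·e^{v(s,y)} for all (s,y) ∈ ℝ². Then the function u(t,x) := v(T(t,x), X(t,x)) + ln(D(t,x)) satisfies u_tt(t,x) = ε·u_xx(t,x) + ε'·e^{u(t,x)} for all (t,x) ∈ ℝ². -/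
section PartialDerivatives

variable {w : ℝ → ℝ → ℝ}

lemma hasDerivAt_pdt (hw : Differentiable ℝ fun p : ℝ × ℝ => w p.1 p.2) (t x : ℝ) :
    HasDerivAt (fun s => w s x) (pdt w t x) t := by
  have h : Differentiable ℝ fun s : ℝ => w s x :=
    hw.comp (f := fun s : ℝ => (s, x)) (by fun_prop)
  exact (h t).hasDerivAt

lemma hasDerivAt_pdx (hw : Differentiable ℝ fun p : ℝ × ℝ => w p.1 p.2) (t x : ℝ) :
    HasDerivAt (fun y => w t y) (pdx w t x) x := by
  have h : Differentiable ℝ fun y : ℝ => w t y :=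
    hw.comp (f := fun y : ℝ => (t, y)) (by fun_prop)
  exact (h x).hasDerivAt

lemma pdt_eq_fderiv_s16 (hw : Differentiable ℝ fun p : ℝ × ℝ => w p.1 p.2) (t x : ℝ) :
    pdt w t x = fderiv ℝ (fun p : ℝ × ℝ => w p.1 p.2) (t, x) (1, 0) := by
  have h1 : HasDerivAt (fun s : ℝ => (s, x)) ((1 : ℝ), (0 : ℝ)) t :=
    (hasDerivAt_id t).prodMk (hasDerivAt_const t x)
  exact ((hw (t, x)).hasFDerivAt.comp_hasDerivAt t h1).deriv

lemma pdx_eq_fderiv_s16 (hw : Differentiable ℝ fun p : ℝ × ℝ => w p.1 p.2) (t x : ℝ) :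
    pdx w t x = fderiv ℝ (fun p : ℝ × ℝ => w p.1 p.2) (t, x) (0, 1) := by
  have h1 : HasDerivAt (fun y : ℝ => (t, y)) ((0 : ℝ), (1 : ℝ)) x :=
    (hasDerivAt_const x t).prodMk (hasDerivAt_id x)
  exact ((hw (t, x)).hasFDerivAt.comp_hasDerivAt x h1).deriv

/-- The chain rule along a plane curve, in terms of partial derivatives. -/
lemma hasDerivAt_comp₂ (hw : Differentiable ℝ fun p : ℝ × ℝ => w p.1 p.2) {g h : ℝ → ℝ}
    {g' h' s : ℝ} (hg : HasDerivAt g g' s) (hh : HasDerivAt h h' s) :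
    HasDerivAt (fun r => w (g r) (h r))
      (pdt w (g s) (h s) * g' + pdx w (g s) (h s) * h') s := by
  have key := (hw (g s, h s)).hasFDerivAt.comp_hasDerivAt s (hg.prodMk hh)
  refine key.congr_deriv ?_
  rw [pdt_eq_fderiv_s16 hw, pdx_eq_fderiv_s16 hw]
  have : ((g', h') : ℝ × ℝ) = g' • ((1 : ℝ), (0 : ℝ)) + h' • ((0 : ℝ), (1 : ℝ)) := by simp
  rw [this, map_add, map_smul, map_smul, smul_eq_mul, smul_eq_mul]
  ring

lemma contDiff_pdt_s16 {m n : WithTop ℕ∞} (hw : ContDiff ℝ n fun p : ℝ × ℝ => w p.1 p.2)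
    (hmn : m + 1 ≤ n) : ContDiff ℝ m fun p : ℝ × ℝ => pdt w p.1 p.2 := by
  have hd := (hw.of_le (le_trans le_add_self hmn)).differentiable one_ne_zero
  simp_rw [pdt_eq_fderiv_s16 hd]
  exact (hw.fderiv_right hmn).clm_apply contDiff_const

lemma contDiff_pdx_s16 {m n : WithTop ℕ∞} (hw : ContDiff ℝ n fun p : ℝ × ℝ => w p.1 p.2)
    (hmn : m + 1 ≤ n) : ContDiff ℝ m fun p : ℝ × ℝ => pdx w p.1 p.2 := by
  have hd := (hw.of_le (le_trans le_add_self hmn)).differentiable one_ne_zero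
  simp_rw [pdx_eq_fderiv_s16 hd]
  exact (hw.fderiv_right hmn).clm_apply contDiff_const

/-- Schwarz's theorem: the mixed partial derivatives of a `C²` function agree. -/
lemma pdt_pdx_comm (hw : ContDiff ℝ 2 fun p : ℝ × ℝ => w p.1 p.2) (t x : ℝ) :
    pdt (pdx w) t x = pdx (pdt w) t x := by
  have hd := hw.differentiable two_ne_zero
  have h12 : (1 : WithTop ℕ∞) + 1 ≤ 2 := by norm_num
  have hd2 : DifferentiableAt ℝ (fderiv ℝ fun p : ℝ × ℝ => w p.1 p.2) (t, x) :=
    (hw.fderiv_right h12).differentiable one_ne_zero (t, x)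
  rw [pdt_eq_fderiv_s16 ((contDiff_pdx_s16 hw h12).differentiable one_ne_zero),
    pdx_eq_fderiv_s16 ((contDiff_pdt_s16 hw h12).differentiable one_ne_zero)]
  simp_rw [pdt_eq_fderiv_s16 hd, pdx_eq_fderiv_s16 hd]
  simp only [Prod.mk.eta]
  rw [fderiv_clm_apply hd2 (differentiableAt_const _),
    fderiv_clm_apply hd2 (differentiableAt_const _)]
  have hsymm : IsSymmSndFDerivAt ℝ (fun p : ℝ × ℝ => w p.1 p.2) (t, x) :=
    hw.contDiffAt.isSymmSndFDerivAt (by simp)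
  simpa using hsymm.eq (1, 0) (0, 1)

end PartialDerivatives

theorem admissible_transformation_T9
    (ε : ℝ) (hε : ε = 1 ∨ ε = -1) (ε' : ℝ)
    (T X : ℝ → ℝ → ℝ)
    (hT : ContDiff ℝ 3 fun p : ℝ × ℝ => T p.1 p.2)
    (hX : ContDiff ℝ 3 fun p : ℝ × ℝ => X p.1 p.2)
    (hsys1 : ∀ t x, pdt T t x = pdx X t x)
    (hsys2 : ∀ t x, pdt X t x = ε * pdx T t x)
    (hD : ∀ t x, 0 < pdt T t x ^ 2 - ε * pdx T t x ^ 2)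
    (v : ℝ → ℝ → ℝ)
    (hv : ContDiff ℝ 2 fun p : ℝ × ℝ => v p.1 p.2)
    (hvpde : ∀ s y, pdt (pdt v) s y = ε * pdx (pdx v) s y + ε' * Real.exp (v s y))
    (u : ℝ → ℝ → ℝ)
    (hu : u = fun t x =>
      v (T t x) (X t x) + Real.log (pdt T t x ^ 2 - ε * pdx T t x ^ 2)) :
    ∀ t x, pdt (pdt u) t x = ε * pdx (pdx u) t x + ε' * Real.exp (u t x) := by
  have h12 : (1 : WithTop ℕ∞) + 1 ≤ 2 := by norm_num
  have h23 : (2 : WithTop ℕ∞) + 1 ≤ 3 := by norm_num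
  have hTd := hT.differentiable three_ne_zero
  have hXd := hX.differentiable three_ne_zero
  have hvd := hv.differentiable two_ne_zero
  have hv1d := (contDiff_pdt_s16 hv h12).differentiable one_ne_zero
  have hv2d := (contDiff_pdx_s16 hv h12).differentiable one_ne_zero
  have hXx : pdx X = pdt T := by ext t x; exact (hsys1 t x).symm
  have hXt : pdt X = fun t x => ε * pdx T t x := by ext t x; exact hsys2 t x
  have ha2 := contDiff_pdt_s16 hT h23
  have hb2 := contDiff_pdx_s16 hT h23
  have hT2 := hT.of_le (show (2 : WithTop ℕ∞) ≤ 3 by norm_num)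
  have hX2 := hX.of_le (show (2 : WithTop ℕ∞) ≤ 3 by norm_num)
  have hbt : ∀ t x, pdt (pdx T) t x = pdx (pdt T) t x := pdt_pdx_comm hT2
  have hTt : ∀ t x, HasDerivAt (fun s => T s x) (pdt T t x) t := hasDerivAt_pdt hTd
  have hTx : ∀ t x, HasDerivAt (fun y => T t y) (pdx T t x) x := hasDerivAt_pdx hTd
  have hXt' : ∀ t x, HasDerivAt (fun s => X s x) (ε * pdx T t x) t := fun t x =>
    (hasDerivAt_pdt hXd t x).congr_deriv (hsys2 t x)
  have hXx' : ∀ t x, HasDerivAt (fun y => X t y) (pdt T t x) x := fun t x =>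
    (hasDerivAt_pdx hXd t x).congr_deriv (hsys1 t x).symm
  have hat : ∀ t x, pdt (pdt T) t x = ε * pdx (pdx T) t x := by
    intro t x
    rw [← hXx, pdt_pdx_comm hX2, hXt]
    exact ((hasDerivAt_pdx (hb2.differentiable two_ne_zero) t x).const_mul ε).deriv
  generalize pdt T = a at *
  generalize pdx T = b at *
  have had := ha2.differentiable two_ne_zero
  have hbd := hb2.differentiable two_ne_zero
  have hp1 := contDiff_pdt_s16 hb2 h12
  have hq1 := contDiff_pdx_s16 hb2 h12
  have hax : pdx a = pdt b := by ext t x; exact (hbt t x).symm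
  have hpd := hp1.differentiable one_ne_zero
  have hqd := hq1.differentiable one_ne_zero
  have hqt : ∀ t x, pdt (pdx b) t x = pdx (pdt b) t x := pdt_pdx_comm hb2
  have hpt : ∀ t x, pdt (pdt b) t x = ε * pdx (pdx b) t x := by
    intro t x
    have hat' : pdt a = fun t x => ε * pdx b t x := by ext t x; exact hat t x
    rw [← hax, pdt_pdx_comm ha2, hat']
    exact ((hasDerivAt_pdx hqd t x).const_mul ε).deriv
  have hat' : ∀ t x, HasDerivAt (fun s => a s x) (ε * pdx b t x) t := fun t x =>
    (hasDerivAt_pdt had t x).congr_deriv (hat t x)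
  have hax' : ∀ t x, HasDerivAt (fun y => a t y) (pdt b t x) x := fun t x =>
    (hasDerivAt_pdx had t x).congr_deriv (hbt t x).symm
  have hbt' : ∀ t x, HasDerivAt (fun s => b s x) (pdt b t x) t := hasDerivAt_pdt hbd
  have hbx' : ∀ t x, HasDerivAt (fun y => b t y) (pdx b t x) x := hasDerivAt_pdx hbd
  have hpt' : ∀ t x, HasDerivAt (fun s => pdt b s x) (ε * pdx (pdx b) t x) t := fun t x =>
    (hasDerivAt_pdt hpd t x).congr_deriv (hpt t x)
  have hpx' : ∀ t x, HasDerivAt (fun y => pdt b t y) (pdx (pdt b) t x) x := hasDerivAt_pdx hpd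
  have hqt' : ∀ t x, HasDerivAt (fun s => pdx b s x) (pdx (pdt b) t x) t := fun t x =>
    (hasDerivAt_pdt hqd t x).congr_deriv (hqt t x)
  have hqx' : ∀ t x, HasDerivAt (fun y => pdx b t y) (pdx (pdx b) t x) x := hasDerivAt_pdx hqd
  have hDt : ∀ t x, HasDerivAt (fun s => a s x ^ 2 - ε * b s x ^ 2)
      (2 * ε * (a t x * pdx b t x - b t x * pdt b t x)) t := fun t x =>
    (((hat' t x).pow 2).sub (((hbt' t x).pow 2).const_mul ε)).congr_deriv (by push_cast; ring)
  have hDx : ∀ t x, HasDerivAt (fun y => a t y ^ 2 - ε * b t y ^ 2)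
      (2 * (a t x * pdt b t x - ε * (b t x * pdx b t x))) x := fun t x =>
    (((hax' t x).pow 2).sub (((hbx' t x).pow 2).const_mul ε)).congr_deriv (by push_cast; ring)
  have hut : pdt u = fun t x =>
      pdt v (T t x) (X t x) * a t x + pdx v (T t x) (X t x) * (ε * b t x) +
        2 * ε * (a t x * pdx b t x - b t x * pdt b t x) / (a t x ^ 2 - ε * b t x ^ 2) := by
    ext t x
    rw [hu]
    exact ((hasDerivAt_comp₂ hvd (hTt t x) (hXt' t x)).add
      ((hDt t x).log (hD t x).ne')).deriv
  have hux : pdx u = fun t x =>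
      pdt v (T t x) (X t x) * b t x + pdx v (T t x) (X t x) * a t x +
        2 * (a t x * pdt b t x - ε * (b t x * pdx b t x)) / (a t x ^ 2 - ε * b t x ^ 2) := by
    ext t x
    rw [hu]
    exact ((hasDerivAt_comp₂ hvd (hTx t x) (hXx' t x)).add
      ((hDx t x).log (hD t x).ne')).deriv
  intro t x
  have hutt := (((hasDerivAt_comp₂ hv1d (hTt t x) (hXt' t x)).mul (hat' t x)).add
    ((hasDerivAt_comp₂ hv2d (hTt t x) (hXt' t x)).mul ((hbt' t x).const_mul ε))).add
    (((((hat' t x).mul (hqt' t x)).sub ((hbt' t x).mul (hpt' t x))).const_mul (2 * ε)).div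
      (hDt t x) (hD t x).ne') |>.deriv
  have huxx := (((hasDerivAt_comp₂ hv1d (hTx t x) (hXx' t x)).mul (hbx' t x)).add
    ((hasDerivAt_comp₂ hv2d (hTx t x) (hXx' t x)).mul (hax' t x))).add
    (((((hax' t x).mul (hpx' t x)).sub (((hbx' t x).mul (hqx' t x)).const_mul ε)).const_mul 2).div
      (hDx t x) (hD t x).ne') |>.deriv
  have hpde := hvpde (T t x) (X t x)
  have hexp : Real.exp (u t x) = Real.exp (v (T t x) (X t x)) * (a t x ^ 2 - ε * b t x ^ 2) := by
    rw [hu, Real.exp_add, Real.exp_log (hD t x)]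
  have hsymm := pdt_pdx_comm hv (T t x) (X t x)
  have hD0 := (hD t x).ne'
  have e1 := (congrArg (fun w => pdt w t x) hut).trans hutt
  have e2 := (congrArg (fun w => pdx w t x) hux).trans huxx
  simp only [Pi.mul_apply, Pi.sub_apply] at e1 e2
  rw [e1, e2, hexp, hsymm, hpde]
  -- The remaining identity is algebraic; it splits over the two values of `ε`.
  rcases hε with rfl | rfl
  · field_simp
    ring
  · field_simp
    ring
end

section
/- Let ε, ε' ∈ ℝ and let a, b, c, d ∈ ℝ with (ad − bc)² = 1. Let u : ℝ × ℝ → ℝ be twice differentiable with u_tt(t,x) = ε·u(t,x)⁴·u_xx(t,x) + ε'·u(t,x) for all (t,x) ∈ ℝ². Then the function v(t,x) := (cx + d)·u(t, (ax + b)/(cx + d)) satisfies v_tt(t,x) = ε·v(t,x)⁴·v_xx(t,x) + ε'·v(t,x) at every point (t,x) with cx + d ≠ 0. -/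
lemma hasDerivAt_moebius (a b c d x : ℝ) (hx : c * x + d ≠ 0) :
    HasDerivAt (fun y => (a * y + b) / (c * y + d))
      ((a * d - b * c) / (c * x + d) ^ 2) x := by
  have hn : HasDerivAt (fun y => a * y + b) a x := by
    simpa using ((hasDerivAt_id x).const_mul a).add_const b
  have hd : HasDerivAt (fun y => c * y + d) c x := by
    simpa using ((hasDerivAt_id x).const_mul c).add_const d
  refine (hn.fun_div hd hx).congr_deriv ?_
  congr 1
  ring

/-- Second derivative of the weighted pullback of `f` under a Möbius map: with the weight
`c x + d`, the terms containing `f'` cancel. -/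
lemma deriv_deriv_moebius (a b c d x : ℝ) (hx : c * x + d ≠ 0) (f : ℝ → ℝ)
    (hf : ContDiff ℝ 2 f) :
    deriv (deriv fun y => (c * y + d) * f ((a * y + b) / (c * y + d))) x =
      (a * d - b * c) ^ 2 / (c * x + d) ^ 3 *
        deriv (deriv f) ((a * x + b) / (c * x + d)) := by
  have hlin : ∀ y : ℝ, HasDerivAt (fun y => c * y + d) c y := fun y => by
    simpa using ((hasDerivAt_id y).const_mul c).add_const d
  have hf0 : Differentiable ℝ f := hf.differentiable (by norm_num)
  have hf1 : Differentiable ℝ (deriv f) :=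
    ((contDiff_succ_iff_deriv (n := 1)).1 hf).2.2.differentiable (by norm_num)
  have hfirst : ∀ y, c * y + d ≠ 0 →
      deriv (fun y => (c * y + d) * f ((a * y + b) / (c * y + d))) y =
        c * f ((a * y + b) / (c * y + d)) +
          (a * d - b * c) * deriv f ((a * y + b) / (c * y + d)) / (c * y + d) := by
    intro y hy
    have hcomp := (hf0 ((a * y + b) / (c * y + d))).hasDerivAt.comp y
      (hasDerivAt_moebius a b c d y hy)
    refine ((hlin y).mul hcomp).deriv.trans ?_
    simp only [Function.comp_apply]
    field_simp
  -- The first-derivative formula holds only off the pole, hence on a neighbourhood of `x`.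
  have hnear : ∀ᶠ y in nhds x, c * y + d ≠ 0 := (hlin x).continuousAt.eventually_ne hx
  rw [Filter.EventuallyEq.deriv_eq (hnear.mono hfirst)]
  have hm := hasDerivAt_moebius a b c d x hx
  have h0 := (hf0 ((a * x + b) / (c * x + d))).hasDerivAt.comp x hm
  have h1 := (hf1 ((a * x + b) / (c * x + d))).hasDerivAt.comp x hm
  refine ((h0.const_mul c).add ((h1.const_mul (a * d - b * c)).div (hlin x) hx)).deriv.trans ?_
  simp only [Function.comp_apply]
  field_simp
  ring

theorem moebius_space_symmetry_case14d
    (ε ε' : ℝ) (a b c d : ℝ) (habcd : (a * d - b * c) ^ 2 = 1)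
    (u : ℝ → ℝ → ℝ)
    (hu : ContDiff ℝ 2 fun p : ℝ × ℝ => u p.1 p.2)
    (hpde : ∀ t x, pdt (pdt u) t x = ε * u t x ^ 4 * pdx (pdx u) t x + ε' * u t x)
    (v : ℝ → ℝ → ℝ)
    (hv : v = fun t x => (c * x + d) * u t ((a * x + b) / (c * x + d))) :
    ∀ t x, c * x + d ≠ 0 →
      pdt (pdt v) t x = ε * v t x ^ 4 * pdx (pdx v) t x + ε' * v t x := by
  intro t x hx
  have hut : ContDiff ℝ 2 (u t) := hu.comp (contDiff_const.prodMk contDiff_id)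
  have htt : pdt (pdt v) t x = (c * x + d) * pdt (pdt u) t ((a * x + b) / (c * x + d)) := by
    subst hv
    simp only [pdt, deriv_const_mul_field]
  have hxx : pdx (pdx v) t x =
      1 / (c * x + d) ^ 3 * pdx (pdx u) t ((a * x + b) / (c * x + d)) := by
    subst hv
    rw [← habcd]
    exact deriv_deriv_moebius a b c d x hx (u t) hut
  rw [htt, hxx, hpde, hv]
  field_simp
end

section
/- Let p, q, s, ε, ε' ∈ ℝ. Let u : ℝ × ℝ → ℝ be twice differentiable with u(t,x) ≠ 0 for all (t,x), and suppose u_tt(t,x) = ε·|u(t,x)|^p·u_xx(t,x) + ε'·|u(t,x)|^q for all (t,x) ∈ ℝ². Then the function v(t,x) := e^{2s}·u(e^{(q−1)s}·t, e^{(q−1−p)s}·x) satisfies v(t,x) ≠ 0 and v_tt(t,x) = ε·|v(t,x)|^p·v_xx(t,x) + ε'·|v(t,x)|^q for all (t,x) ∈ ℝ². -/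
/-- For a rescaled function, the chain rule needs no differentiability of `u`: in the
non-differentiable case, or when a scaling factor vanishes, both sides are `0`. -/
theorem pdt_rescale (C a b : ℝ) (u : ℝ → ℝ → ℝ) :
    pdt (fun t x => C * u (a * t) (b * x)) = fun t x => (C * a) * pdt u (a * t) (b * x) := by
  funext t x
  simp only [pdt]
  rw [deriv_const_mul_field, deriv_comp_mul_left a (fun r => u r (b * x)) t, smul_eq_mul, mul_assoc]

theorem pdx_rescale (C a b : ℝ) (u : ℝ → ℝ → ℝ) :
    pdx (fun t x => C * u (a * t) (b * x)) = fun t x => (C * b) * pdx u (a * t) (b * x) := by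
  funext t x
  simp only [pdx]
  rw [deriv_const_mul_field, deriv_comp_mul_left b (fun y => u (a * t) y) x, smul_eq_mul, mul_assoc]

theorem case13_symmetry_flow
    (p q s ε ε' : ℝ)
    (u : ℝ → ℝ → ℝ)
    (hu : ContDiff ℝ 2 fun r : ℝ × ℝ => u r.1 r.2)
    (hune : ∀ t x, u t x ≠ 0)
    (hpde : ∀ t x, pdt (pdt u) t x
      = ε * |u t x| ^ p * pdx (pdx u) t x + ε' * |u t x| ^ q)
    (v : ℝ → ℝ → ℝ)
    (hv : v = fun t x =>
      Real.exp (2 * s) * u (Real.exp ((q - 1) * s) * t) (Real.exp ((q - 1 - p) * s) * x)) :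
    ∀ t x, v t x ≠ 0 ∧
      pdt (pdt v) t x = ε * |v t x| ^ p * pdx (pdx v) t x + ε' * |v t x| ^ q := by
  subst hv
  intro t x
  refine ⟨mul_ne_zero (Real.exp_ne_zero _) (hune _ _), ?_⟩
  simp only [pdt_rescale, pdx_rescale]
  rw [hpde, abs_mul, Real.abs_exp, Real.mul_rpow (Real.exp_pos _).le (abs_nonneg _),
    Real.mul_rpow (Real.exp_pos _).le (abs_nonneg _), ← Real.exp_mul, ← Real.exp_mul]
  have h1 : Real.exp (2 * s) * Real.exp ((q - 1) * s) * Real.exp ((q - 1) * s)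
      = Real.exp (2 * s * q) := by
    rw [← Real.exp_add, ← Real.exp_add]; ring_nf
  have h2 : Real.exp (2 * s * p) *
      (Real.exp (2 * s) * Real.exp ((q - 1 - p) * s) * Real.exp ((q - 1 - p) * s))
      = Real.exp (2 * s * q) := by
    rw [← Real.exp_add, ← Real.exp_add, ← Real.exp_add]; ring_nf
  set U := u (Real.exp ((q - 1) * s) * t) (Real.exp ((q - 1 - p) * s) * x)
  set W := pdx (pdx u) (Real.exp ((q - 1) * s) * t) (Real.exp ((q - 1 - p) * s) * x)
  linear_combination (ε * |U| ^ p * W + ε' * |U| ^ q) * h1 - ε * |U| ^ p * W * h2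
end
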